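/- Let F and E be finite-dimensional real vector spaces with a nondegenerate bilinear pairing ⟨·|·⟩ : E × F → ℝ, and let D ⊆ F × E be a linear subspace. If ⟨e|f⟩ = 0 for every (f, e) ∈ D and dim D = dim F, then D is a Dirac structure, i.e., D equals its orthogonal complement with respect to the symmetrized pairing. -/

import Mathlib

/-- The symmetrized pairing `⟨⟨(f₁,e₁),(f₂,e₂)⟩⟩ = ⟨e₂|f₁⟩ + ⟨e₁|f₂⟩` on `F × E`. -/
def symmPairing {F E : Type*} [AddCommGroup F] [Module ℝ F] [AddCommGroup E] [Module ℝ E]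
    (pair : E →ₗ[ℝ] F →ₗ[ℝ] ℝ) : LinearMap.BilinForm ℝ (F × E) :=
  pair.flip.compl₁₂ (LinearMap.fst ℝ F E) (LinearMap.snd ℝ F E) +
    pair.compl₁₂ (LinearMap.snd ℝ F E) (LinearMap.fst ℝ F E)

section symmPairing

variable {F E : Type*} [AddCommGroup F] [Module ℝ F] [AddCommGroup E] [Module ℝ E]
  (pair : E →ₗ[ℝ] F →ₗ[ℝ] ℝ)

theorem symmPairing_apply (x y : F × E) :
    symmPairing pair x y = pair y.2 x.1 + pair x.2 y.1 := rfl

theorem symmPairing_isSymm : (symmPairing pair).IsSymm :=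
  ⟨fun x y => by simp [symmPairing_apply, add_comm]⟩

theorem symmPairing_nondegenerate
    (hnd₁ : ∀ e : E, (∀ f : F, pair e f = 0) → e = 0)
    (hnd₂ : ∀ f : F, (∀ e : E, pair e f = 0) → f = 0) :
    (symmPairing pair).Nondegenerate := by
  refine (symmPairing_isSymm pair).isRefl.nondegenerate_iff_separatingLeft.2 fun x hx => ?_
  refine Prod.ext (hnd₂ _ fun e => ?_) (hnd₁ _ fun f => ?_)
  · simpa [symmPairing_apply] using hx (0, e)
  · simpa [symmPairing_apply] using hx (f, 0)

/-- A power-conserving subspace is isotropic for the symmetrized pairing. -/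
theorem le_orthogonal_symmPairing {D : Submodule ℝ (F × E)}
    (hpow : ∀ x ∈ D, pair x.2 x.1 = 0) : D ≤ (symmPairing pair).orthogonal D := by
  intro x hx y hy
  have h := hpow _ (D.add_mem hx hy)
  simp only [Prod.fst_add, Prod.snd_add, map_add, LinearMap.add_apply, hpow x hx, hpow y hy] at h
  rw [symmPairing_apply]
  linarith

end symmPairing

/-- If a linear subspace `D ⊆ F × E` is power conserving (`⟨e|f⟩ = 0` for all `(f,e) ∈ D`)
and `dim D = dim F`, then `D` is a Dirac structure, i.e. `D` equals its orthogonal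
complement with respect to the symmetrized pairing
`⟨⟨(f₁,e₁),(f₂,e₂)⟩⟩ = ⟨e₂|f₁⟩ + ⟨e₁|f₂⟩`. -/
theorem dirac_of_power_conserving_and_dim
    {F E : Type*} [AddCommGroup F] [Module ℝ F] [AddCommGroup E] [Module ℝ E]
    [FiniteDimensional ℝ F] [FiniteDimensional ℝ E]
    (pair : E →ₗ[ℝ] F →ₗ[ℝ] ℝ)
    (hnd₁ : ∀ e : E, (∀ f : F, pair e f = 0) → e = 0)
    (hnd₂ : ∀ f : F, (∀ e : E, pair e f = 0) → f = 0)
    (D : Submodule ℝ (F × E))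
    (hpow : ∀ x ∈ D, pair x.2 x.1 = 0)
    (hdim : Module.finrank ℝ D = Module.finrank ℝ F) :
    (D : Set (F × E)) =
      {x : F × E | ∀ y ∈ D, pair y.2 x.1 + pair x.2 y.1 = 0} := by
  have : pair.IsPerfPair := .of_injective
    ((injective_iff_map_eq_zero _).2 fun e he => hnd₁ e fun f => by simp [he])
    ((injective_iff_map_eq_zero _).2 fun f hf => hnd₂ f fun e => by
      simpa using LinearMap.congr_fun hf e)
  have hEF : Module.finrank ℝ E = Module.finrank ℝ F := Module.finrank_of_isPerfPair pair
  have hD : D = (symmPairing pair).orthogonal D := by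
    refine Submodule.eq_of_le_of_finrank_eq (le_orthogonal_symmPairing pair hpow) ?_
    rw [LinearMap.BilinForm.finrank_orthogonal (symmPairing_nondegenerate pair hnd₁ hnd₂),
      Module.finrank_prod]
    omega
  ext x
  rw [SetLike.mem_coe, Set.mem_ofPred_eq]
  conv_lhs => rw [hD]
  refine forall₂_congr fun y _ => ?_
  rw [symmPairing_apply, add_comm]
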